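/- A CLSP instance with positive unit capacity usages K_i > 0 has a feasible solution if and only if the cumulative capacity covers the cumulative weighted demand in every prefix of periods, i.e., if and only if \sum_{j=1}^{t} \sum_{i=1}^{N} K_i d_{i,j} \le \sum_{j=1}^{t} C_j for every t \in \{1,...,T\}. -/

import Mathlib

/-- Feasibility of a solution `(x, y, I)` for the CLSP model (P1):
nonnegative production and inventories, binary setups, zero initial inventory,
inventory balance, capacity constraints, and setup-forcing constraints
(imposed whenever `K i > 0`). -/
def CLSPFeasible (N T : ℕ) (d : ℕ → ℕ → ℝ) (K C : ℕ → ℝ)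
    (x y I : ℕ → ℕ → ℝ) : Prop :=
  (∀ i ∈ Finset.Icc 1 N, ∀ t ∈ Finset.Icc 1 T, 0 ≤ x i t) ∧
  (∀ i ∈ Finset.Icc 1 N, ∀ t ∈ Finset.Icc 1 T, 0 ≤ I i t) ∧
  (∀ i ∈ Finset.Icc 1 N, ∀ t ∈ Finset.Icc 1 T, y i t = 0 ∨ y i t = 1) ∧
  (∀ i ∈ Finset.Icc 1 N, I i 0 = 0) ∧
  (∀ i ∈ Finset.Icc 1 N, ∀ t ∈ Finset.Icc 1 T,
      I i (t - 1) + x i t - I i t = d i t) ∧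
  (∀ t ∈ Finset.Icc 1 T, ∑ i ∈ Finset.Icc 1 N, K i * x i t ≤ C t) ∧
  (∀ i ∈ Finset.Icc 1 N, ∀ t ∈ Finset.Icc 1 T, 0 < K i →
      x i t ≤ min (C t / K i) (∑ r ∈ Finset.Icc t T, d i r) * y i t)

theorem clsp_core (s : Finset ℕ) (K Cap : ℕ → ℝ) (hK : ∀ i ∈ s, 0 < K i) (h0 : Cap 0 = 0) :
    ∀ (T : ℕ) (D : ℕ → ℕ → ℝ), (∀ i ∈ s, 0 ≤ D i 0) →
      (∀ i ∈ s, ∀ t < T, D i t ≤ D i (t + 1)) →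
      (∀ t ≤ T, ∑ i ∈ s, K i * D i t ≤ Cap t) →
      (∀ t < T, Cap t ≤ Cap (t + 1)) →
      ∃ X : ℕ → ℕ → ℝ, (∀ i ∈ s, X i 0 = 0) ∧ (∀ i ∈ s, ∀ t < T, X i t ≤ X i (t + 1)) ∧
        (∀ i ∈ s, ∀ t ≤ T, D i t ≤ X i t) ∧ (∀ i ∈ s, X i T = D i T) ∧
        (∀ t < T, ∑ i ∈ s, K i * (X i (t + 1) - X i t) ≤ Cap (t + 1) - Cap t) := by
  intro T
  induction T with
  | zero =>
    intro D hD0 _ hcap _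
    refine ⟨D, ?_, by simp, by simp, by simp, by simp⟩
    intro i hi
    have h1 := hcap 0 le_rfl
    rw [h0] at h1
    have hnn : ∀ j ∈ s, 0 ≤ K j * D j 0 := fun j hj => mul_nonneg (hK j hj).le (hD0 j hj)
    have h2 := Finset.single_le_sum hnn hi
    have h3 := hK i hi
    have h4 := hD0 i hi
    by_contra hne
    have : 0 < D i 0 := lt_of_le_of_ne h4 (Ne.symm hne)
    have := mul_pos h3 this
    linarith
  | succ T ih =>
    intro D hD0 hmono hcap hCap
    obtain ⟨S, hS⟩ : ∃ S, S = ∑ i ∈ s, K i * (D i (T + 1) - D i T) := ⟨_, rfl⟩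
    have hSnn : 0 ≤ S := by
      rw [hS]
      exact Finset.sum_nonneg fun i hi =>
        mul_nonneg (hK i hi).le (sub_nonneg.2 (hmono i hi T (Nat.lt_succ_self T)))
    have hc := hCap T (Nat.lt_succ_self T)
    obtain ⟨p, hp0, hp1, hpS, hpc⟩ : ∃ p : ℝ, 0 ≤ p ∧ p ≤ 1 ∧ p * S ≤ Cap (T + 1) - Cap T ∧
        (p = 1 ∨ p * S = Cap (T + 1) - Cap T) := by
      by_cases h : S ≤ Cap (T + 1) - Cap T
      · exact ⟨1, by norm_num, le_rfl, by linarith, Or.inl rfl⟩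
      · push Not at h
        have hSp : 0 < S := by linarith
        have he : (Cap (T + 1) - Cap T) / S * S = Cap (T + 1) - Cap T := by field_simp
        exact ⟨(Cap (T + 1) - Cap T) / S, div_nonneg (by linarith) hSnn,
          (div_le_one hSp).2 h.le, he.le, Or.inr he⟩
    have hS2 : S = ∑ i ∈ s, K i * D i (T + 1) - ∑ i ∈ s, K i * D i T := by
      rw [hS, ← Finset.sum_sub_distrib]
      exact Finset.sum_congr rfl fun i _ => by ring
    let E : ℕ → ℝ := fun i => D i (T + 1) - p * (D i (T + 1) - D i T)
    have hE1 : ∀ i ∈ s, D i T ≤ E i := fun i hi => by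
      have := hmono i hi T (Nat.lt_succ_self T)
      simp only [E]; nlinarith
    have hE2 : ∀ i ∈ s, E i ≤ D i (T + 1) := fun i hi => by
      have := hmono i hi T (Nat.lt_succ_self T)
      simp only [E]; nlinarith
    have hE3 : ∑ i ∈ s, K i * E i = ∑ i ∈ s, K i * D i (T + 1) - p * S := by
      rw [hS, Finset.mul_sum, ← Finset.sum_sub_distrib]
      exact Finset.sum_congr rfl fun i _ => by simp only [E]; ring
    have hDE : ∀ i ∈ s, ∀ t ≤ T, D i t ≤ if t < T then D i t else E i := by
      intro i hi t ht
      split_ifs with h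
      · exact le_rfl
      · have : t = T := by omega
        subst this; exact hE1 i hi
    obtain ⟨X, hX0, hXm, hXD, hXT, hXc⟩ := ih (fun i t => if t < T then D i t else E i)
      (fun i hi => (hD0 i hi).trans (hDE i hi 0 (Nat.zero_le _)))
      (by
        intro i hi t ht
        have h1 := hmono i hi t (by omega)
        have h2 := hDE i hi (t + 1) (by omega)
        simp only [if_pos ht] at h2 ⊢
        exact h1.trans h2)
      (by
        intro t ht
        by_cases h : t < T
        · simp only [if_pos h]; exact hcap t (by omega)
        · have : t = T := by omega
          subst this
          simp only [if_neg h]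
          rw [hE3]
          have h1 := hcap t (by omega)
          have h2 := hcap (t + 1) le_rfl
          rcases hpc with rfl | h3
          · linarith
          · linarith)
      (fun t ht => hCap t (by omega))
    simp only [lt_irrefl, if_false] at hXT
    refine ⟨fun i t => if t ≤ T then X i t else D i (T + 1), ?_, ?_, ?_, ?_, ?_⟩
    · intro i hi
      simpa using hX0 i hi
    · intro i hi t ht
      by_cases h : t < T
      · simp only [if_pos h.le, if_pos (Nat.succ_le_of_lt h)]
        exact hXm i hi t h
      · have : t = T := by omega
        subst this
        simp only [le_refl, if_true, if_neg (Nat.not_succ_le_self t), hXT i hi]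
        exact hE2 i hi
    · intro i hi t ht
      by_cases h : t ≤ T
      · simp only [if_pos h]
        exact (hDE i hi t h).trans (hXD i hi t h)
      · have : t = T + 1 := by omega
        subst this
        simp
    · intro i hi
      simp
    · intro t ht
      by_cases h : t < T
      · simp only [if_pos h.le, if_pos (Nat.succ_le_of_lt h)]
        exact hXc t h
      · have : t = T := by omega
        subst this
        simp only [le_refl, if_true, if_neg (Nat.not_succ_le_self t)]
        refine le_trans (le_of_eq ?_) hpS
        rw [hS, Finset.mul_sum]
        refine Finset.sum_congr rfl fun i hi => ?_
        rw [hXT i hi]; simp only [E]; ring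

/-- with positive unit capacity usages, the CLSP instance has a feasible
solution iff the cumulative capacity covers the cumulative weighted demand in every
prefix of periods. -/
theorem clsp_feasible_iff_prefix_capacity
    (N T : ℕ) (d : ℕ → ℕ → ℝ) (K C : ℕ → ℝ)
    (hd : ∀ i ∈ Finset.Icc 1 N, ∀ t ∈ Finset.Icc 1 T, 0 ≤ d i t)
    (hK : ∀ i ∈ Finset.Icc 1 N, 0 < K i)
    (hC : ∀ t ∈ Finset.Icc 1 T, 0 ≤ C t) :
    (∃ x y I : ℕ → ℕ → ℝ, CLSPFeasible N T d K C x y I) ↔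
      ∀ t ∈ Finset.Icc 1 T,
        (∑ j ∈ Finset.Icc 1 t, ∑ i ∈ Finset.Icc 1 N, K i * d i j)
          ≤ ∑ j ∈ Finset.Icc 1 t, C j := by
  constructor
  · rintro ⟨x, y, I, _, hI, _, hI0, hb, hc, _⟩ t ht
    have key : ∀ i ∈ Finset.Icc 1 N, ∀ t ≤ T,
        ∑ j ∈ Finset.Icc 1 t, d i j + I i t = ∑ j ∈ Finset.Icc 1 t, x i j := by
      intro i hi t
      induction t with
      | zero => intro _; simp [hI0 i hi]
      | succ t ih =>
        intro ht
        have h1 := ih (by omega)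
        have h2 := hb i hi (t + 1) (Finset.mem_Icc.2 ⟨by omega, ht⟩)
        rw [Nat.add_sub_cancel] at h2
        rw [Finset.sum_Icc_succ_top (by omega), Finset.sum_Icc_succ_top (by omega)]
        linarith
    have htT := (Finset.mem_Icc.1 ht).2
    calc _ = ∑ i ∈ Finset.Icc 1 N, K i * ∑ j ∈ Finset.Icc 1 t, d i j := by
            rw [Finset.sum_comm]; simp only [Finset.mul_sum]
      _ ≤ ∑ i ∈ Finset.Icc 1 N, K i * ∑ j ∈ Finset.Icc 1 t, x i j := by
            refine Finset.sum_le_sum fun i hi => mul_le_mul_of_nonneg_left ?_ (hK i hi).le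
            have h1 := key i hi t htT
            have h2 := hI i hi t ht
            linarith
      _ = ∑ j ∈ Finset.Icc 1 t, ∑ i ∈ Finset.Icc 1 N, K i * x i j := by
            rw [Finset.sum_comm]; simp only [Finset.mul_sum]
      _ ≤ _ := by
            refine Finset.sum_le_sum fun j hj => hc j ?_
            rw [Finset.mem_Icc] at hj ⊢
            omega
  · intro h
    have hstep : ∀ (f : ℕ → ℝ) (t : ℕ),
        ∑ j ∈ Finset.Icc 1 (t + 1), f j = ∑ j ∈ Finset.Icc 1 t, f j + f (t + 1) :=
      fun f t => Finset.sum_Icc_succ_top (by omega) f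
    obtain ⟨X, hX0, hXm, hXD, hXT, hXc⟩ := clsp_core (Finset.Icc 1 N) K
      (fun t => ∑ j ∈ Finset.Icc 1 t, C j) hK (by simp) T
      (fun i t => ∑ j ∈ Finset.Icc 1 t, d i j) (by simp)
      (by
        intro i hi t ht
        have := hd i hi (t + 1) (Finset.mem_Icc.2 ⟨by omega, ht⟩)
        simp only [hstep]; linarith)
      (by
        intro t ht
        rcases Nat.eq_zero_or_pos t with rfl | h1
        · simp
        · refine le_trans (le_of_eq ?_) (h t (Finset.mem_Icc.2 ⟨h1, ht⟩))
          rw [Finset.sum_comm]; simp only [Finset.mul_sum])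
      (by
        intro t ht
        have := hC (t + 1) (Finset.mem_Icc.2 ⟨by omega, ht⟩)
        simp only [hstep]; linarith)
    have hxnn : ∀ i ∈ Finset.Icc 1 N, ∀ t < T, 0 ≤ X i (t + 1) - X i t :=
      fun i hi t ht => sub_nonneg.2 (hXm i hi t ht)
    have hcap : ∀ t < T, ∑ i ∈ Finset.Icc 1 N, K i * (X i (t + 1) - X i t) ≤ C (t + 1) := by
      intro t ht
      have := hXc t ht
      simp only [hstep] at this
      linarith
    have hXle : ∀ i ∈ Finset.Icc 1 N, ∀ t ≤ T, X i t ≤ X i T := by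
      intro i hi t ht
      have hind : ∀ n, t + n ≤ T → X i t ≤ X i (t + n) := by
        intro n
        induction n with
        | zero => intro _; exact le_rfl
        | succ n ih => intro hn; exact (ih (by omega)).trans (hXm i hi (t + n) (by omega))
      have := hind (T - t) (by omega)
      rwa [Nat.add_sub_cancel' ht] at this
    refine ⟨fun i t => X i t - X i (t - 1), fun _ _ => 1,
      fun i t => X i t - ∑ j ∈ Finset.Icc 1 t, d i j, ?_, ?_, ?_, ?_, ?_, ?_, ?_⟩
    · intro i hi t ht
      obtain ⟨h1, h2⟩ := Finset.mem_Icc.1 ht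
      obtain ⟨k, rfl⟩ := Nat.exists_eq_add_of_le' h1
      exact hxnn i hi k h2
    · intro i hi t ht
      exact sub_nonneg.2 (hXD i hi t (Finset.mem_Icc.1 ht).2)
    · intro i _ t _
      exact Or.inr rfl
    · intro i hi
      simp [hX0 i hi]
    · intro i hi t ht
      obtain ⟨h1, h2⟩ := Finset.mem_Icc.1 ht
      obtain ⟨k, rfl⟩ := Nat.exists_eq_add_of_le' h1
      simp only [Nat.add_sub_cancel, hstep]
      ring
    · intro t ht
      obtain ⟨h1, h2⟩ := Finset.mem_Icc.1 ht
      obtain ⟨k, rfl⟩ := Nat.exists_eq_add_of_le' h1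
      exact hcap k h2
    · intro i hi t ht hKi
      obtain ⟨h1, h2⟩ := Finset.mem_Icc.1 ht
      obtain ⟨k, rfl⟩ := Nat.exists_eq_add_of_le' h1
      simp only [Nat.add_sub_cancel, mul_one]
      refine le_min ?_ ?_
      · rw [le_div_iff₀ hKi]
        have hnn : ∀ j ∈ Finset.Icc 1 N, 0 ≤ K j * (X j (k + 1) - X j k) :=
          fun j hj => mul_nonneg (hK j hj).le (hxnn j hj k h2)
        have h3 := Finset.single_le_sum hnn hi
        have h4 := hcap k h2
        linarith
      · have hsplit : ∑ j ∈ Finset.Icc 1 T, d i j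
            = ∑ j ∈ Finset.Icc 1 k, d i j + ∑ j ∈ Finset.Icc (k + 1) T, d i j := by
          rw [← Finset.sum_union]
          · refine Finset.sum_congr ?_ fun _ _ => rfl
            ext a
            simp only [Finset.mem_union, Finset.mem_Icc]
            omega
          · rw [Finset.disjoint_left]
            intro a ha hb
            rw [Finset.mem_Icc] at ha hb
            omega
        have h3 := hXle i hi (k + 1) h2
        have h4 := hXT i hi
        have h5 := hXD i hi k (by omega)
        linarith
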